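/- arXiv:2105.02058 — 2 statements merged into one kernel-verified Lean document; each statement's English description precedes it below -/
import Mathlib

section
/- Let λ ∈ ℂ be such that P⊥(H − λ)P⊥ is invertible on Ran P⊥, with inverse R⊥(λ). If φ ∈ Ran P satisfies F_P(H − λ)φ = 0, then the vector ψ := Q_P(λ)φ = φ − R⊥(λ)Hφ satisfies Hψ = λψ and Pψ = φ; in particular ψ ≠ 0 whenever φ ≠ 0. -/
/-!
Put `a = H - λ`, `Q = P - R a P` and `P⊥ = 1 - P`, where `R = R⊥(λ)`. The theorem rests on the two
operator identities `a Q = F_P(a)` and `P Q = P`. In the first, the `P⊥`-component of `a Q` is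
`P⊥ a P - (P⊥ a P⊥) R a P = 0`, so `a Q = P a Q = F_P(a)`; the second holds because `P R = 0`. Since
`R P = 0`, replacing `a` by `H` in `Q` changes nothing. So `Q` maps the kernel of `F_P(H - λ)` into
that of `H - λ`, and `P` undoes it on `Ran P`.
-/

/-- `r` is a right inverse of the compression `e * a * e` in the corner `e * A * e`, whose unit is
`e`. For `e = 1 - P` and `a = H - λ` this is the role of `R⊥(λ)`. -/
structure IsCompressionRightInverse {A : Type*} [Mul A] (e a r : A) : Prop where
  mul_mul_eq_self : e * r * e = r
  compression_mul : e * a * e * r = e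

namespace IsCompressionRightInverse

section Semigroup

variable {A : Type*} [Semigroup A] {e a r : A}

theorem mul_left_eq_self (h : IsCompressionRightInverse e a r) (he : IsIdempotentElem e) :
    e * r = r := by
  rw [← h.mul_mul_eq_self, ← mul_assoc, ← mul_assoc, he.eq]

theorem mul_right_eq_self (h : IsCompressionRightInverse e a r) (he : IsIdempotentElem e) :
    r * e = r := by
  rw [← h.mul_mul_eq_self, mul_assoc, he.eq]

end Semigroup

theorem of_smul_eq_on_range {A M : Type*} [Monoid A] [MulAction A M] [FaithfulSMul A M]
    {e a r : A} (he : IsIdempotentElem e) (hr : e * r * e = r)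
    (hinv : ∀ x ∈ Set.range (fun y : M ↦ e • y), (e * a * e) • r • x = e • x) :
    IsCompressionRightInverse e a r where
  mul_mul_eq_self := hr
  compression_mul := by
    have hre : r * e = r := by rw [← hr, mul_assoc, he.eq]
    refine eq_of_smul_eq_smul fun x : M ↦ ?_
    calc (e * a * e * r) • x = (e * a * e) • r • e • x := by rw [smul_smul r, hre, mul_smul]
      _ = e • e • x := hinv _ ⟨x, rfl⟩
      _ = e • x := by rw [smul_smul, he.eq]

end IsCompressionRightInverse

section NonUnitalRing

variable {A : Type*} [NonUnitalRing A] {p a r : A}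

/-- The Feshbach–Schur map `F_p(a)`, with `r` standing for the inverse of the compression of `a` to
the range of `1 - p`. -/
def feshbachSchurMap (p a r : A) : A := p * (a - a * r * a) * p

/-- The operator `Q_p` attached to the Feshbach–Schur map, with `r` standing for the inverse of the
compression to the range of `1 - p`. In the notation `Q_P(λ) = P - R⊥(λ) H P`, the argument `a`
is `H`. -/
def feshbachSchurQ (p a r : A) : A := p - r * a * p

theorem mul_feshbachSchurQ_eq_self (hp : IsIdempotentElem p) (hpr : p * r = 0) :
    p * feshbachSchurQ p a r = p := by
  rw [feshbachSchurQ, mul_sub, hp.eq, mul_assoc r, ← mul_assoc p, hpr, zero_mul, sub_zero]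

end NonUnitalRing

section Ring

variable {A : Type*} [Ring A] {p a r : A}

namespace IsCompressionRightInverse

theorem mul_eq_zero_left (h : IsCompressionRightInverse (1 - p) a r) (hp : IsIdempotentElem p) :
    p * r = 0 := by
  rw [← h.mul_left_eq_self hp.one_sub, ← mul_assoc, hp.mul_one_sub_self, zero_mul]

theorem mul_eq_zero_right (h : IsCompressionRightInverse (1 - p) a r) (hp : IsIdempotentElem p) :
    r * p = 0 := by
  rw [← h.mul_right_eq_self hp.one_sub, mul_assoc, hp.one_sub_mul_self, mul_zero]

theorem mul_feshbachSchurQ_eq_map (h : IsCompressionRightInverse (1 - p) a r)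
    (hp : IsIdempotentElem p) : a * feshbachSchurQ p a r = feshbachSchurMap p a r := by
  have hcompl : (1 - p) * a * r = 1 - p := by
    rw [← h.mul_left_eq_self hp.one_sub, ← mul_assoc, h.compression_mul]
  have hcompl_Q : (1 - p) * (a * feshbachSchurQ p a r) = 0 :=
    calc (1 - p) * (a * feshbachSchurQ p a r)
        = (1 - p) * a * p - (1 - p) * a * r * a * p := by rw [feshbachSchurQ]; noncomm_ring
      _ = 0 := by rw [hcompl, sub_self]
  calc a * feshbachSchurQ p a r
      = p * (a * feshbachSchurQ p a r) + (1 - p) * (a * feshbachSchurQ p a r) := by noncomm_ring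
    _ = p * (a * feshbachSchurQ p a r) := by rw [hcompl_Q, add_zero]
    _ = feshbachSchurMap p a r := by rw [feshbachSchurQ, feshbachSchurMap]; noncomm_ring

end IsCompressionRightInverse

theorem feshbachSchurQ_sub_smul_one {𝕜 : Type*} [CommSemiring 𝕜] [Algebra 𝕜 A] (c : 𝕜)
    (hrp : r * p = 0) : feshbachSchurQ p (a - c • 1) r = feshbachSchurQ p a r := by
  rw [feshbachSchurQ, feshbachSchurQ, mul_sub, mul_smul_comm, mul_one, sub_mul, smul_mul_assoc,
    hrp, smul_zero, sub_zero]

end Ring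

theorem feshbach_schur_eigenvector_backward_general
    {𝕜 A M : Type*} [CommSemiring 𝕜] [Ring A] [Algebra 𝕜 A] [AddCommGroup M] [Module 𝕜 M]
    [Module A M] [IsScalarTower 𝕜 A M] {H P R : A} {lam : 𝕜} {φ : M} (hP : IsIdempotentElem P)
    (hR : IsCompressionRightInverse (1 - P) (H - lam • 1) R)
    (hφ : φ ∈ Set.range (fun x : M ↦ P • x))
    (hFφ : feshbachSchurMap P (H - lam • 1) R • φ = 0) :
    feshbachSchurQ P H R • φ = φ - R • H • φ ∧
    H • (φ - R • H • φ) = lam • (φ - R • H • φ) ∧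
    P • (φ - R • H • φ) = φ ∧
    (φ ≠ 0 → φ - R • H • φ ≠ 0) := by
  have hPφ : P • φ = φ := by
    obtain ⟨x, rfl⟩ := hφ
    rw [smul_smul, hP.eq]
  have hQφ : feshbachSchurQ P H R • φ = φ - R • H • φ := by
    rw [feshbachSchurQ, sub_smul, mul_smul, mul_smul, hPφ]
  have hHQ : (H - lam • 1) * feshbachSchurQ P H R = feshbachSchurMap P (H - lam • 1) R := by
    rw [← feshbachSchurQ_sub_smul_one lam (hR.mul_eq_zero_right hP),
      hR.mul_feshbachSchurQ_eq_map hP]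
  have hPψ : P • (φ - R • H • φ) = φ := by
    rw [← hQφ, smul_smul, mul_feshbachSchurQ_eq_self hP (hR.mul_eq_zero_left hP), hPφ]
  refine ⟨hQφ, ?_, hPψ, fun hne hψ ↦ hne ?_⟩
  · rw [← sub_eq_zero, ← hFφ, ← hHQ, mul_smul, hQφ, sub_smul, smul_assoc, one_smul]
  · rw [← hPψ, hψ, smul_zero]

instance continuousLinearMap_isScalarTower {S 𝕜 E : Type*} [Semiring 𝕜] [AddCommMonoid E]
    [TopologicalSpace E] [ContinuousAdd E] [Module 𝕜 E] [DistribSMul S E]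
    [SMulCommClass 𝕜 S E] [ContinuousConstSMul S E] : IsScalarTower S (E →L[𝕜] E) E :=
  ⟨fun _ _ _ ↦ rfl⟩

/-- Feshbach–Schur map, reconstruction of eigenvectors: if `φ ∈ Ran P` satisfies
`F_P(H-λ)φ = 0`, then `ψ := Q_P(λ)φ = φ - R⊥(λ)Hφ` satisfies `Hψ = λψ`, `Pψ = φ`,
and `ψ ≠ 0` whenever `φ ≠ 0`. -/
theorem feshbach_schur_eigenvector_backward
    {𝓗 : Type*} [NormedAddCommGroup 𝓗] [InnerProductSpace ℂ 𝓗] [CompleteSpace 𝓗]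
    (H P : 𝓗 →L[ℂ] 𝓗) (hP : P ∘L P = P)
    (Pperp : 𝓗 →L[ℂ] 𝓗) (hPperp : Pperp = 1 - P)
    (lam : ℂ) (R : 𝓗 →L[ℂ] 𝓗)
    (A : 𝓗 →L[ℂ] 𝓗) (hA : A = Pperp ∘L ((H - lam • 1) ∘L Pperp))
    (hR1 : R = Pperp ∘L (R ∘L Pperp))
    (hR2 : ∀ x ∈ Set.range ⇑Pperp, R (A x) = Pperp x)
    (hR3 : ∀ x ∈ Set.range ⇑Pperp, A (R x) = Pperp x)
    (F Q : 𝓗 →L[ℂ] 𝓗)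
    (hF : F = P ∘L (((H - lam • 1) - (H - lam • 1) ∘L (R ∘L (H - lam • 1))) ∘L P))
    (hQ : Q = P - R ∘L (H ∘L P))
    (φ : 𝓗) (hφ : φ ∈ Set.range ⇑P) (hFφ : F φ = 0) :
    Q φ = φ - R (H φ) ∧
    H (φ - R (H φ)) = lam • (φ - R (H φ)) ∧
    P (φ - R (H φ)) = φ ∧
    (φ ≠ 0 → φ - R (H φ) ≠ 0) := by
  subst hPperp hA hF hQ
  exact feshbach_schur_eigenvector_backward_general hP
    (.of_smul_eq_on_range (IsIdempotentElem.one_sub hP) hR1.symm hR3) hφ hFφ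
end

section
/- Suppose P⊥HP⊥ is invertible on Ran P⊥ with inverse R⊥. Then (1 − P*)H*(1 − P*) is invertible on Ran(1 − P*) with inverse (R⊥)*, and the adjoint of the Feshbach–Schur map satisfies (P(H − H R⊥ H)P)* = P*(H* − H*(R⊥)*H*)P*, i.e. F_P(H)* = F_{P*}(H*). In particular, if H is self-adjoint and P is an orthogonal projection, then F_P(H) = P(H − H R⊥ H)P is self-adjoint. -/
/-!
Write `Q = 1 - P`. Because `Q` is idempotent, `R` inverts `QHQ` on `Ran Q` if and only if
`QR = R = RQ` and `RHQ = Q = QHR`. These identities are exchanged in pairs by the adjoint, so `R*`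
inverts `Q*H*Q*` on `Ran Q*`. They also determine `R` from `Q` and `H`, so `R` is self-adjoint
when `H` and `P` are.
-/

/-- `r` is the inverse of the compression `q * h * q` of `h` in the corner `q M q`, whose unit is
the idempotent `q`. Since `r` absorbs `q`, the factor `q` between `r` and `h` is left out of the two
inverse identities. -/
structure IsCornerInverse {M : Type*} [Mul M] (q h r : M) : Prop where
  unit_mul_inv : q * r = r
  inv_mul_unit : r * q = r
  inv_mul_mul_unit : r * h * q = q
  unit_mul_mul_inv : q * h * r = q

theorem isCornerInverse_iff_compression {M : Type*} [Semigroup M] {q h r : M}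
    (hq : IsIdempotentElem q) :
    IsCornerInverse q h r ↔
      r = q * (r * q) ∧ r * (q * (h * q)) * q = q ∧ q * (h * q) * r * q = q := by
  have hleft : r * (q * (h * q)) * q = r * q * h * q := by simp only [mul_assoc, hq.eq]
  have hright : q * (h * q) * r * q = q * h * (q * (r * q)) := by simp only [mul_assoc]
  rw [hleft, hright]
  constructor
  · rintro ⟨hqr, hrq, hrhq, hqhr⟩
    rw [hrq, hqr]
    exact ⟨rfl, hrhq, hqhr⟩
  · rintro ⟨hr, hrhq, hqhr⟩
    have hqr : q * r = r := by rw [hr, ← mul_assoc, hq.eq]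
    have hrq : r * q = r := by rw [hr, mul_assoc, mul_assoc, hq.eq]
    rw [hrq] at hrhq
    rw [← hr] at hqhr
    exact ⟨hqr, hrq, hrhq, hqhr⟩

namespace IsCornerInverse

variable {M : Type*} [Semigroup M] {q h r s : M}

theorem unique (hr : IsCornerInverse q h r) (hs : IsCornerInverse q h s) : r = s :=
  calc
    r = r * (q * h * s) := by rw [hs.unit_mul_mul_inv, hr.inv_mul_unit]
    _ = r * q * h * s := by simp only [mul_assoc]
    _ = r * h * (q * s) := by rw [hr.inv_mul_unit, hs.unit_mul_inv]
    _ = r * h * q * s := by rw [mul_assoc (r * h)]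
    _ = s := by rw [hr.inv_mul_mul_unit, hs.unit_mul_inv]

variable [StarMul M]

protected theorem star (hr : IsCornerInverse q h r) :
    IsCornerInverse (star q) (star h) (star r) where
  unit_mul_inv := by rw [← star_mul, hr.inv_mul_unit]
  inv_mul_unit := by rw [← star_mul, hr.unit_mul_inv]
  inv_mul_mul_unit := by rw [← star_mul, ← star_mul, ← mul_assoc, hr.unit_mul_mul_inv]
  unit_mul_mul_inv := by rw [← star_mul, ← star_mul, ← mul_assoc, hr.inv_mul_mul_unit]

theorem isSelfAdjoint (hr : IsCornerInverse q h r) (hq : IsSelfAdjoint q)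
    (hh : IsSelfAdjoint h) : IsSelfAdjoint r := by
  have hr_star : IsCornerInverse q h (star r) := by
    simpa only [hq.star_eq, hh.star_eq] using hr.star
  exact hr_star.unique hr

end IsCornerInverse

/-- The Feshbach–Schur map `F_p(h) = p (h - h r h) p`. The inverse `r` of the compression of `h` to
the complement of `p` is an explicit argument, so that no choice of inverse is involved. -/
def feshbachSchur {A : Type*} [Mul A] [Sub A] (p h r : A) : A :=
  p * ((h - h * (r * h)) * p)

section FeshbachSchur

variable {A : Type*} [NonUnitalRing A] [StarRing A]

theorem star_feshbachSchur (p h r : A) :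
    star (feshbachSchur p h r) = feshbachSchur (star p) (star h) (star r) := by
  simp only [feshbachSchur, star_mul, star_sub, mul_assoc]

theorem isSelfAdjoint_feshbachSchur {p h r : A} (hp : IsSelfAdjoint p)
    (hh : IsSelfAdjoint h) (hr : IsSelfAdjoint r) : IsSelfAdjoint (feshbachSchur p h r) := by
  rw [IsSelfAdjoint, star_feshbachSchur, hp.star_eq, hh.star_eq, hr.star_eq]

end FeshbachSchur

section InverseOnRange

variable {S E : Type*} [Semiring S] [AddCommMonoid E] [Module S E] [TopologicalSpace E]

/-- `A` is invertible on `Ran Q` with inverse `R`, where `R` is extended to the whole space by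
`R = Q R Q`. -/
structure IsInverseOnRange (Q A R : E →L[S] E) : Prop where
  eq_compression : R = Q ∘L (R ∘L Q)
  inv_apply : ∀ x ∈ Set.range ⇑Q, R (A x) = Q x
  apply_inv : ∀ x ∈ Set.range ⇑Q, A (R x) = Q x

theorem forall_mem_range_apply_eq_iff {Q : E →L[S] E} (hQ : IsIdempotentElem Q)
    (B : E →L[S] E) : (∀ x ∈ Set.range ⇑Q, B x = Q x) ↔ B * Q = Q := by
  rw [Set.forall_mem_range]
  calc
    (∀ x, B (Q x) = Q (Q x)) ↔ B * Q = Q * Q :=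
      (ContinuousLinearMap.ext_iff (f := B * Q) (g := Q * Q)).symm
    _ ↔ B * Q = Q := by rw [hQ.eq]

theorem isInverseOnRange_compression_iff {Q : E →L[S] E} (hQ : IsIdempotentElem Q)
    (H R : E →L[S] E) :
    IsInverseOnRange Q (Q ∘L (H ∘L Q)) R ↔ IsCornerInverse Q H R := by
  have hinv_apply := forall_mem_range_apply_eq_iff hQ (R * (Q * (H * Q)))
  have happly_inv := forall_mem_range_apply_eq_iff hQ (Q * (H * Q) * R)
  rw [isCornerInverse_iff_compression hQ, ← hinv_apply, ← happly_inv]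
  exact ⟨fun ⟨hR, hRA, hAR⟩ => ⟨hR, hRA, hAR⟩, fun ⟨hR, hRA, hAR⟩ => ⟨hR, hRA, hAR⟩⟩

end InverseOnRange

open ContinuousLinearMap in
theorem feshbach_schur_adjoint_general
    {𝕜 𝓗 : Type*} [RCLike 𝕜] [NormedAddCommGroup 𝓗] [InnerProductSpace 𝕜 𝓗] [CompleteSpace 𝓗]
    {H P R : 𝓗 →L[𝕜] 𝓗} (hP : IsIdempotentElem P)
    (hR : IsInverseOnRange (1 - P) ((1 - P) ∘L (H ∘L (1 - P))) R) :
    IsInverseOnRange (1 - adjoint P) ((1 - adjoint P) ∘L (adjoint H ∘L (1 - adjoint P)))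
      (adjoint R) ∧
    adjoint (feshbachSchur P H R) = feshbachSchur (adjoint P) (adjoint H) (adjoint R) ∧
    (IsSelfAdjoint H → IsSelfAdjoint P → IsSelfAdjoint (feshbachSchur P H R)) := by
  have hQ : IsIdempotentElem (1 - P) := hP.one_sub
  have hQ_star : star (1 - P) = 1 - adjoint P := by rw [star_sub, star_one, star_eq_adjoint]
  have hcorner : IsCornerInverse (1 - P) H R := (isInverseOnRange_compression_iff hQ H R).1 hR
  refine ⟨?_, star_feshbachSchur P H R, fun hH hP_self => ?_⟩
  · rw [← hQ_star]
    exact (isInverseOnRange_compression_iff hQ.star _ _).2 hcorner.star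
  · have hQ_self : IsSelfAdjoint (1 - P) := (IsSelfAdjoint.one _).sub hP_self
    exact isSelfAdjoint_feshbachSchur hP_self hH (hcorner.isSelfAdjoint hQ_self hH)

open ContinuousLinearMap in
/-- Feshbach–Schur map and adjoints: if `P⊥HP⊥` is invertible on `Ran P⊥` with inverse `R⊥`,
then `(1-P*)H*(1-P*)` is invertible on `Ran (1-P*)` with inverse `(R⊥)*`, and
`F_P(H)* = F_{P*}(H*)`.  In particular, if `H` is self-adjoint and `P` is an orthogonal
projection, then `F_P(H)` is self-adjoint. -/
theorem feshbach_schur_adjoint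
    {𝓗 : Type*} [NormedAddCommGroup 𝓗] [InnerProductSpace ℂ 𝓗] [CompleteSpace 𝓗]
    (H P : 𝓗 →L[ℂ] 𝓗) (hP : P ∘L P = P)
    (Pperp : 𝓗 →L[ℂ] 𝓗) (hPperp : Pperp = 1 - P)
    (R : 𝓗 →L[ℂ] 𝓗)
    (A : 𝓗 →L[ℂ] 𝓗) (hA : A = Pperp ∘L (H ∘L Pperp))
    (hR1 : R = Pperp ∘L (R ∘L Pperp))
    (hR2 : ∀ x ∈ Set.range ⇑Pperp, R (A x) = Pperp x)
    (hR3 : ∀ x ∈ Set.range ⇑Pperp, A (R x) = Pperp x) :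
    (adjoint R = (1 - adjoint P) ∘L (adjoint R ∘L (1 - adjoint P))) ∧
    (∀ x ∈ Set.range ⇑(1 - adjoint P),
      adjoint R (((1 - adjoint P) ∘L (adjoint H ∘L (1 - adjoint P))) x) = (1 - adjoint P) x) ∧
    (∀ x ∈ Set.range ⇑(1 - adjoint P),
      ((1 - adjoint P) ∘L (adjoint H ∘L (1 - adjoint P))) (adjoint R x) = (1 - adjoint P) x) ∧
    (adjoint (P ∘L ((H - H ∘L (R ∘L H)) ∘L P)) =
      adjoint P ∘L ((adjoint H - adjoint H ∘L (adjoint R ∘L adjoint H)) ∘L adjoint P)) ∧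
    (IsSelfAdjoint H → IsSelfAdjoint P →
      IsSelfAdjoint (P ∘L ((H - H ∘L (R ∘L H)) ∘L P))) := by
  subst hPperp hA
  obtain ⟨⟨hR_star, hinv, happly⟩, hF, hself⟩ := feshbach_schur_adjoint_general hP ⟨hR1, hR2, hR3⟩
  exact ⟨hR_star, hinv, happly, hF, hself⟩
end
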